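/- There exist a countable set X and weight structures d, m : X × X → [0,∞], both satisfying axioms (0) and (Σ), such that φ(d) = φ(m) but φ(d ⊔ m) ≠ φ(d), where d ⊔ m is the pointwise supremum (d ⊔ m)(x,y) = max(d(x,y), m(x,y)). Consequently, the fibers of φ are in general not closed under binary joins, and φ does not preserve binary joins. -/

import Mathlib

open scoped ENNReal

/-- Axiom (0). -/
def Ax0 {X : Type*} (d : X × X → ℝ≥0∞) : Prop := ∀ x : X, d (x, x) = 0

/-- Axiom (Σ). -/
def AxSym {X : Type*} (d : X × X → ℝ≥0∞) : Prop := ∀ x y : X, d (x, y) = d (y, x)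

/-- `O` is `φ(d)`-open: every point of `O` has some ball around it inside `O`. -/
def phiOpen {X : Type*} (d : X × X → ℝ≥0∞) (O : Set X) : Prop :=
  ∀ x ∈ O, ∃ ε : ℝ≥0∞, 0 < ε ∧ {y : X | d (x, y) < ε} ⊆ O

/-!
The topology induced by `graphWeight G` depends only on the connected components of `G`, but the
join of two such weights is the weight of the intersection of the two graphs. If a graph and its
complement are both connected, as for the path on four vertices, then both weights induce the
indiscrete topology, whereas their join is the weight of the edgeless graph, which induces the
discrete topology.
-/

open Classical in
/-- The weight structure of a graph: `0` between equal or adjacent vertices, `1` otherwise. It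
turns the partition into connected components into a topology: the open sets are their unions. -/
noncomputable def graphWeight {X : Type*} (G : SimpleGraph X) (p : X × X) : ℝ≥0∞ :=
  if p.1 = p.2 ∨ G.Adj p.1 p.2 then 0 else 1

section graphWeight

variable {X : Type*} (G H : SimpleGraph X)

theorem ax0_graphWeight : Ax0 (graphWeight G) := fun x => by
  simp [graphWeight]

theorem axSym_graphWeight : AxSym (graphWeight G) := fun x y => by
  classical exact if_congr (or_congr eq_comm (G.adj_comm x y)) rfl rfl

theorem graphWeight_sup : graphWeight G ⊔ graphWeight H = graphWeight (G ⊓ H) := by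
  ext ⟨x, y⟩
  by_cases hxy : x = y <;> by_cases hG : G.Adj x y <;> by_cases hH : H.Adj x y <;>
    simp [graphWeight, hxy, hG, hH]

variable {G H}

theorem graphWeight_eq_zero_of_adj {x y : X} (h : G.Adj x y) : graphWeight G (x, y) = 0 :=
  if_pos (.inr h)

theorem graphWeight_lt_one_iff {x y : X} : graphWeight G (x, y) < 1 ↔ x = y ∨ G.Adj x y := by
  unfold graphWeight
  split_ifs with h <;> simpa using h

theorem phiOpen_graphWeight_iff {O : Set X} :
    phiOpen (graphWeight G) O ↔ ∀ x ∈ O, ∀ y, G.Reachable x y → y ∈ O := by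
  constructor
  · rintro hO x hx y ⟨w⟩
    induction w with
    | nil => exact hx
    | cons huv _ ih =>
      obtain ⟨ε, hε, hball⟩ := hO _ hx
      exact ih (hball ((graphWeight_eq_zero_of_adj huv).trans_lt hε))
  · refine fun hO x hx => ⟨1, one_pos, fun y hy => hO x hx y ?_⟩
    obtain rfl | hadj := graphWeight_lt_one_iff.1 hy
    · rfl
    · exact hadj.reachable

theorem phiOpen_graphWeight_iff_of_preconnected (hG : G.Preconnected) {O : Set X} :
    phiOpen (graphWeight G) O ↔ O = ∅ ∨ O = Set.univ := by
  rw [phiOpen_graphWeight_iff]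
  constructor
  · intro hO
    refine O.eq_empty_or_nonempty.imp_right ?_
    rintro ⟨x, hx⟩
    exact Set.eq_univ_of_forall fun y => hO x hx y (hG x y)
  · rintro (rfl | rfl) <;> simp

theorem phiOpen_graphWeight_sup_of_disjoint (h : Disjoint G H) (O : Set X) :
    phiOpen (graphWeight G ⊔ graphWeight H) O := by
  rw [graphWeight_sup, h.eq_bot, phiOpen_graphWeight_iff]
  rintro x hx y hxy
  rwa [← SimpleGraph.reachable_bot.1 hxy]

theorem not_phiOpen_graphWeight_singleton [Nontrivial X] (hG : G.Preconnected) (x : X) :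
    ¬phiOpen (graphWeight G) {x} := by
  simp [phiOpen_graphWeight_iff_of_preconnected hG]

end graphWeight

/-- The path `0 - 1 - 2 - 3` is self-complementary: its complement is the path `2 - 0 - 3 - 1`. -/
def pathGraphFourIsoCompl : SimpleGraph.pathGraph 4 ≃g (SimpleGraph.pathGraph 4)ᶜ where
  toFun := ![2, 0, 3, 1]
  invFun := ![1, 3, 0, 2]
  left_inv := by decide
  right_inv := by decide
  map_rel_iff' := by
    simp only [SimpleGraph.compl_adj, SimpleGraph.pathGraph_adj, Equiv.coe_fn_mk]
    decide

/-- There are a countable set `X` and weight structures `d, m` satisfying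
(0) and (Σ) with `φ(d) = φ(m)` but `φ(d ⊔ m) ≠ φ(d)` (pointwise supremum); hence the
fibers of `φ` need not be closed under binary joins and `φ` does not preserve binary
joins. -/
theorem stmt14 :
    ∃ (X : Type) (_ : Countable X) (d m : X × X → ℝ≥0∞),
      (Ax0 d ∧ AxSym d) ∧ (Ax0 m ∧ AxSym m) ∧
      {O : Set X | phiOpen d O} = {O : Set X | phiOpen m O} ∧
      {O : Set X | phiOpen (d ⊔ m) O} ≠ {O : Set X | phiOpen d O} := by
  let P := SimpleGraph.pathGraph 4
  have hP : P.Preconnected := SimpleGraph.pathGraph_preconnected 4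
  have hPc : Pᶜ.Preconnected := pathGraphFourIsoCompl.preconnected_iff.1 hP
  refine ⟨Fin 4, inferInstance, graphWeight P, graphWeight Pᶜ,
    ⟨ax0_graphWeight P, axSym_graphWeight P⟩, ⟨ax0_graphWeight Pᶜ, axSym_graphWeight Pᶜ⟩, ?_, ?_⟩
  · ext O
    exact (phiOpen_graphWeight_iff_of_preconnected hP).trans
      (phiOpen_graphWeight_iff_of_preconnected hPc).symm
  · intro heq
    exact not_phiOpen_graphWeight_singleton hP 0
      (heq.subset (phiOpen_graphWeight_sup_of_disjoint disjoint_compl_right {0}))
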